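/- Suppose φ:𝒳^v→ℝ is measurable and the tail assumption (T) holds with some p ∈ [1,∞], and suppose limsup_{n→∞}‖W_{Q_n}‖_{qΔ} < ∞ for some q ∈ (1,∞] with 1/p + 1/q ≤ 1. For M > 0 set φ_M = φ·1{|φ| ≤ M}, and let U_{n,M}(X), V_{n,M}(X) be defined as U_n(X), V_n(X) with φ replaced by φ_M. Then for every δ > 0: limsup_{M→∞} limsup_{n→∞} (1/n) log P( |V_n(X) − V_{n,M}(X)| ≥ δ ) = −∞, and limsup_{M→∞} limsup_{n→∞} (1/n) log P( |U_n(X) − U_{n,M}(X)| ≥ δ ) = −∞. -/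

import Mathlib

open MeasureTheory Filter Set
open scoped ENNReal NNReal

noncomputable section

/-- The uniform probability measure on `[0,1]`. -/
def unif01 : Measure ℝ := volume.restrict (Set.Icc 0 1)

instance : IsProbabilityMeasure unif01 :=
  ⟨by rw [unif01, Measure.restrict_apply_univ, Real.volume_Icc]; norm_num⟩

/-- The `L^r` norm (`r : ℝ≥0∞`) of a kernel, viewed as a function on `[0,1]²`. -/
def kerNorm (W : ℝ → ℝ → ℝ) (r : ℝ≥0∞) : ℝ≥0∞ :=
  eLpNorm (fun z : ℝ × ℝ => W z.1 z.2) r (unif01.prod unif01)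

/-- The (strong) cut distance `d_□` between two kernels on `[0,1]²`. -/
def cutDist (W₁ W₂ : ℝ → ℝ → ℝ) : ℝ :=
  ⨆ S : {S : Set ℝ // MeasurableSet S}, ⨆ T : {T : Set ℝ // MeasurableSet T},
    |∫ x in Set.Icc (0:ℝ) 1 ∩ S.1, ∫ y in Set.Icc (0:ℝ) 1 ∩ T.1, (W₁ x y - W₂ x y)|

/-- A Lebesgue-measure-preserving bijection of `[0,1]`. -/
def MPB (σ : ℝ → ℝ) : Prop :=
  Set.BijOn σ (Set.Icc 0 1) (Set.Icc 0 1) ∧ MeasurePreserving σ unif01 unif01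

/-- The weak cut distance `δ_□`. -/
def weakCutDist (W₁ W₂ : ℝ → ℝ → ℝ) : ℝ :=
  ⨅ σ : {σ : ℝ → ℝ // MPB σ}, cutDist (fun x y => W₁ (σ.1 x) (σ.1 y)) W₂

/-- The step kernel `W_{Q_n}` associated to an `n × n` matrix `Q`:
it equals `Q i j` when `⌈n x⌉ = i, ⌈n y⌉ = j`. -/
def stepKernel (n : ℕ) (Q : Fin n → Fin n → ℝ) : ℝ → ℝ → ℝ := fun x y =>
  ∑ i : Fin n, ∑ j : Fin n,
    if x ∈ Set.Ioc (((i : ℕ) : ℝ)/n) ((((i : ℕ) : ℝ)+1)/n) ∧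
       y ∈ Set.Ioc (((j : ℕ) : ℝ)/n) ((((j : ℕ) : ℝ)+1)/n)
    then Q i j else 0

/-- Product over the edges of `H` (each edge counted once) of `f a b`. -/
def edgeProd {v : ℕ} (G : SimpleGraph (Fin v)) [DecidableRel G.Adj]
    (f : Fin v → Fin v → ℝ) : ℝ :=
  ∏ p ∈ Finset.univ.filter (fun p : Fin v × Fin v => G.Adj p.1 p.2 ∧ p.1 < p.2), f p.1 p.2

/-- The number of edges `|E(H)|`. -/
def edgeCard {v : ℕ} (G : SimpleGraph (Fin v)) [DecidableRel G.Adj] : ℕ :=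
  (Finset.univ.filter (fun p : Fin v × Fin v => G.Adj p.1 p.2 ∧ p.1 < p.2)).card

/-- The inhomogeneous U-statistic `U_n(X)` (sum over distinct indices). -/
def Ustat {X : Type*} {v : ℕ} (G : SimpleGraph (Fin v)) [DecidableRel G.Adj]
    (φ : (Fin v → X) → ℝ) (n : ℕ) (Q : Fin n → Fin n → ℝ) (x : Fin n → X) : ℝ :=
  (∑ i ∈ Finset.univ.filter (fun i : Fin v → Fin n => Function.Injective i),
      φ (x ∘ i) * edgeProd G (fun a b => Q (i a) (i b))) / (n : ℝ) ^ v

/-- The inhomogeneous V-statistic `V_n(X)` (sum over all indices). -/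
def Vstat {X : Type*} {v : ℕ} (G : SimpleGraph (Fin v)) [DecidableRel G.Adj]
    (φ : (Fin v → X) → ℝ) (n : ℕ) (Q : Fin n → Fin n → ℝ) (x : Fin n → X) : ℝ :=
  (∑ i : Fin v → Fin n, φ (x ∘ i) * edgeProd G (fun a b => Q (i a) (i b))) / (n : ℝ) ^ v

open Classical in
/-- Kullback-Leibler divergence `D(ν | ρ) ∈ [0,∞]`. -/
def KLdiv {α : Type*} [MeasurableSpace α] (ν ρ : Measure α) : ℝ≥0∞ :=
  if ν ≪ ρ ∧ Integrable (llr ν ρ) ν then ENNReal.ofReal (∫ a, llr ν ρ a ∂ν) else ⊤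

open Classical in
/-- `ν` itself if it is a probability measure, junk value `0` otherwise. -/
def probOr {α : Type*} [MeasurableSpace α] (ν : Measure α) : Measure α :=
  if IsProbabilityMeasure ν then ν else 0

instance {α : Type*} [MeasurableSpace α] (ν : Measure α) : SigmaFinite (probOr ν) := by
  unfold probOr
  split_ifs with h
  · haveI := h; infer_instance
  · infer_instance

/-- `v`-fold product of a (probability) measure. -/
def piProb {α : Type*} [MeasurableSpace α] (v : ℕ) (ν : Measure α) : Measure (Fin v → α) :=
  Measure.pi fun _ => probOr ν

/-- The functional `T_{W,φ}(ν) = E[φ(B₁,…,B_v) ∏_{(a,b) ∈ E(H)} W(A_a,A_b)]`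
for `(A_a,B_a)` i.i.d. with law `ν`. -/
def TWphi {X : Type*} [MeasurableSpace X] {v : ℕ} (G : SimpleGraph (Fin v))
    [DecidableRel G.Adj] (W : ℝ → ℝ → ℝ) (φ : (Fin v → X) → ℝ)
    (ν : Measure (ℝ × X)) : ℝ :=
  ∫ z : Fin v → ℝ × X,
    φ (fun a => (z a).2) * edgeProd G (fun a b => W (z a).1 (z b).1) ∂(piProb v ν)

/-- Membership in `𝒯ℳ`: probability measures on `[0,1] × 𝒳` whose first marginal
is uniform on `[0,1]`. -/
def inTM {X : Type*} [MeasurableSpace X] (ν : Measure (ℝ × X)) : Prop :=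
  IsProbabilityMeasure ν ∧ ν.map Prod.fst = unif01

/-- The rate function `I₀(t) = inf { D(ν|ρ) : ν ∈ 𝒯ℳ, D(ν|ρ) < ∞, T_{W,φ}(ν) = t }`. -/
def rate0 {X : Type*} [MeasurableSpace X] {v : ℕ} (G : SimpleGraph (Fin v))
    [DecidableRel G.Adj] (W : ℝ → ℝ → ℝ) (φ : (Fin v → X) → ℝ) (μ : Measure X)
    (t : ℝ) : ℝ≥0∞ :=
  ⨅ ν : {ν : Measure (ℝ × X) //
      inTM ν ∧ KLdiv ν (unif01.prod μ) ≠ ⊤ ∧ TWphi G W φ ν = t},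
    KLdiv ν.1 (unif01.prod μ)

/-- Tail assumption (T): `E_μ[e^{λ ψ(X)^p}] < ∞` for all `λ > 0`; for `p = ∞`
it means `ψ` is bounded. -/
def TailCond {X : Type*} [MeasurableSpace X] (μ : Measure X) (ψ : X → ℝ)
    (p : ℝ≥0∞) : Prop :=
  if p = ⊤ then ∃ C : ℝ, ∀ x, ψ x ≤ C
  else ∀ lam : ℝ, 0 < lam →
    ∫⁻ x, ENNReal.ofReal (Real.exp (lam * ψ x ^ p.toReal)) ∂μ < ⊤

/-- A sequence of random elements `T n` defined on probability spaces `(Ω n, P n)`,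
taking values in a topological space `E`, satisfies a large deviation principle at
speed `n` with good rate function `I`. -/
def SatisfiesLDP {E : Type*} [TopologicalSpace E] {Ω : ℕ → Type*}
    [∀ n, MeasurableSpace (Ω n)] (P : ∀ n, Measure (Ω n)) (T : ∀ n, Ω n → E)
    (I : E → ℝ≥0∞) : Prop :=
  (∀ c : ℝ≥0∞, c ≠ ⊤ → IsCompact {x | I x ≤ c}) ∧
  ∀ F : Set E, MeasurableSet[borel E] F →
    (-(⨅ x ∈ interior F, (I x : EReal)) ≤
      Filter.atTop.liminf fun n : ℕ =>
        (((n : ℝ)⁻¹ : ℝ) : EReal) * ENNReal.log (P n {ω | T n ω ∈ F})) ∧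
    (Filter.atTop.limsup (fun n : ℕ =>
        (((n : ℝ)⁻¹ : ℝ) : EReal) * ENNReal.log (P n {ω | T n ω ∈ F})) ≤
      -(⨅ x ∈ closure F, (I x : EReal)))

end

/-!
Cutting `φ` off at level `M ≥ T ^ v` only removes tuples containing some `X_a` with `ψ(X_a) > T`.
Hölder's inequality with exponents `p, q`, followed by Finner's inequality for the product of the
entries of `Q` (every vertex of `G` lies on at most `maxDegree` edges), therefore bounds the
`p`-th power of the removed part of the statistic by a constant multiple of
`mean(ψ ^ p · 1{ψ > T}) · mean(ψ ^ p) ^ (v - 1)`, with averages over the sample. By Chernoff's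
bound the first average exceeds any fixed `ε > 0` with probability at most `exp (-n R(T))`, where
`R(T) → ∞` as `T → ∞` because `ψ ^ p` has all exponential moments, while the second exceeds a
large constant with probability at most `exp (-n K)` for `K` as large as desired.
-/

section Finner

theorem lintegral_prod_rpow_le_prod_lintegral_rpow {α κ : Type*} [MeasurableSpace α]
    {ν : Measure α} [IsProbabilityMeasure ν] (E : Finset κ) (P : κ → Prop) [DecidablePred P]
    {c : κ → ℝ} (hc : ∀ e, 0 ≤ c e) (hsum : ∑ e ∈ E with P e, c e ≤ 1)
    {f : κ → α → ℝ≥0∞} (hf : ∀ e, Measurable (f e)) (hconst : ∀ e, ¬P e → ∀ x y, f e x = f e y) :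
    ∫⁻ x, ∏ e ∈ E, f e x ^ c e ∂ν ≤ ∏ e ∈ E, (∫⁻ x, f e x ∂ν) ^ c e := by
  have hHolder : ∫⁻ x, ∏ e ∈ E with P e, f e x ^ c e ∂ν
      ≤ ∏ e ∈ E with P e, (∫⁻ x, f e x ∂ν) ^ c e := by
    simpa using ENNReal.lintegral_mul_prod_norm_pow_le (μ := ν) (E.filter P) (g := 1)
      aemeasurable_const (fun e _ => (hf e).aemeasurable) (1 - ∑ e ∈ E with P e, c e)
      (by ring) (sub_nonneg.2 hsum) (fun e _ => hc e)
  obtain ⟨x₀⟩ := nonempty_of_isProbabilityMeasure ν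
  have hint : ∀ e, ¬P e → ∫⁻ x, f e x ∂ν = f e x₀ := fun e he => by
    simp only [hconst e he _ x₀, lintegral_const, measure_univ, mul_one]
  calc ∫⁻ x, ∏ e ∈ E, f e x ^ c e ∂ν
      = ∫⁻ x, (∏ e ∈ E with P e, f e x ^ c e) * ∏ e ∈ E with ¬P e, f e x₀ ^ c e ∂ν := by
        refine lintegral_congr fun x => ?_
        rw [← Finset.prod_filter_mul_prod_filter_not E P]
        congr 1
        exact Finset.prod_congr rfl fun e he => by rw [hconst e (Finset.mem_filter.1 he).2 x x₀]
    _ = (∫⁻ x, ∏ e ∈ E with P e, f e x ^ c e ∂ν) * ∏ e ∈ E with ¬P e, f e x₀ ^ c e :=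
        lintegral_mul_const _ (Finset.measurable_prod _ fun e _ => (hf e).pow_const _)
    _ ≤ (∏ e ∈ E with P e, (∫⁻ x, f e x ∂ν) ^ c e) *
          ∏ e ∈ E with ¬P e, (∫⁻ x, f e x ∂ν) ^ c e := by
        rw [Finset.prod_congr rfl fun e he => by rw [← hint e (Finset.mem_filter.1 he).2]]
        gcongr
    _ = ∏ e ∈ E, (∫⁻ x, f e x ∂ν) ^ c e := Finset.prod_filter_mul_prod_filter_not E P _

theorem enorm_finsetProd {κ : Type*} (E : Finset κ) (f : κ → ℝ) :
    ‖∏ e ∈ E, f e‖ₑ = ∏ e ∈ E, ‖f e‖ₑ := by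
  simp only [enorm_eq_nnnorm, nnnorm_prod, ENNReal.ofNNReal_finsetProd]

theorem eLpNormEssSup_prod_le {α κ : Type*} [MeasurableSpace α] {ν : Measure α} (E : Finset κ)
    (f : κ → α → ℝ) :
    eLpNormEssSup (fun x => ∏ e ∈ E, f e x) ν ≤ ∏ e ∈ E, eLpNormEssSup (f e) ν := by
  refine eLpNormEssSup_le_of_ae_enorm_bound ?_
  have hle := (Finset.eventually_all E).2 fun e _ => enorm_ae_le_eLpNormEssSup (f e) ν
  filter_upwards [hle] with x hx
  rw [enorm_finsetProd]
  exact Finset.prod_le_prod' hx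

variable {ι κ : Type*} [DecidableEq ι] {X : ι → Type*} [∀ i, MeasurableSpace (X i)]
  {m : ∀ i, Measure (X i)} [∀ i, IsProbabilityMeasure (m i)] {E : Finset κ} {S : κ → Finset ι}

theorem lmarginal_update_of_dependsOn {f : (∀ i, X i) → ℝ≥0∞} (hf : Measurable f) {T : Set ι}
    (hfT : DependsOn f T) {s : Finset ι} {a : ι} (has : a ∉ s) (haT : a ∉ T) (x : ∀ i, X i)
    (y : X a) : (∫⋯∫⁻_s, f ∂m) (Function.update x a y) = (∫⋯∫⁻_s, f ∂m) x := by
  rw [lmarginal_update_of_notMem hf has]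
  have hcomp : (f ∘ fun z => Function.update z a y) = f :=
    funext fun z => hfT fun i hi => Function.update_of_ne (ne_of_mem_of_not_mem hi haT) _ _
  rw [hcomp]

theorem lmarginal_prod_rpow_le {c : κ → ℝ} (hc : ∀ e, 0 ≤ c e)
    (hcover : ∀ a, ∑ e ∈ E with a ∈ S e, c e ≤ 1) {f : κ → (∀ i, X i) → ℝ≥0∞}
    (hf : ∀ e, Measurable (f e)) (hfS : ∀ e, DependsOn (f e) (S e)) (s : Finset ι)
    (x : ∀ i, X i) :
    (∫⋯∫⁻_s, (fun x => ∏ e ∈ E, f e x ^ c e) ∂m) x ≤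
      ∏ e ∈ E, (∫⋯∫⁻_s, f e ∂m) x ^ c e := by
  induction s using Finset.induction_on generalizing x with
  | empty => simp only [lmarginal_empty, le_refl]
  | insert a s ha ih =>
    have hmeas : Measurable fun x => ∏ e ∈ E, f e x ^ c e :=
      Finset.measurable_prod _ fun e _ => (hf e).pow_const _
    rw [lmarginal_insert _ hmeas ha]
    simp only [lmarginal_insert _ (hf _) ha]
    refine (lintegral_mono fun y => ih _).trans ?_
    refine lintegral_prod_rpow_le_prod_lintegral_rpow E (fun e => a ∈ S e) hc (hcover a)
      (fun e => ((hf e).lmarginal m).comp (measurable_update x)) fun e hae y z => ?_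
    simp only [lmarginal_update_of_dependsOn (hf e) (hfS e) ha hae]

variable [Fintype ι]

theorem finner_inequality {c : κ → ℝ} (hc : ∀ e, 0 ≤ c e)
    (hcover : ∀ a, ∑ e ∈ E with a ∈ S e, c e ≤ 1) {f : κ → (∀ i, X i) → ℝ≥0∞}
    (hf : ∀ e, Measurable (f e)) (hfS : ∀ e, DependsOn (f e) (S e)) :
    ∫⁻ x, ∏ e ∈ E, f e x ^ c e ∂Measure.pi m ≤ ∏ e ∈ E, (∫⁻ x, f e x ∂Measure.pi m) ^ c e := by
  obtain ⟨x⟩ := nonempty_of_isProbabilityMeasure (Measure.pi m)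
  simpa only [lmarginal_univ] using lmarginal_prod_rpow_le (m := m) hc hcover hf hfS Finset.univ x

theorem eLpNorm_prod_le_of_dependsOn {D : ℕ} (hD : D ≠ 0)
    (hdeg : ∀ a, (E.filter fun e => a ∈ S e).card ≤ D) {f : κ → (∀ i, X i) → ℝ}
    (hf : ∀ e, Measurable (f e)) (hfS : ∀ e, DependsOn (f e) (S e)) (q : ℝ≥0∞) :
    eLpNorm (fun x => ∏ e ∈ E, f e x) q (Measure.pi m) ≤
      ∏ e ∈ E, eLpNorm (f e) (q * D) (Measure.pi m) := by
  rcases eq_or_ne q 0 with rfl | hq0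
  · simp only [eLpNorm_exponent_zero, zero_le]
  rcases eq_or_ne q ⊤ with rfl | hqtop
  · simpa only [ENNReal.top_mul (Nat.cast_ne_zero.2 hD), eLpNorm_exponent_top] using
      eLpNormEssSup_prod_le E f
  have hDpos : (0 : ℝ) < D := by positivity
  have hcover : ∀ a, ∑ e ∈ E with a ∈ S e, (D : ℝ)⁻¹ ≤ 1 := fun a => by
    rw [Finset.sum_const, nsmul_eq_mul, ← div_eq_mul_inv, div_le_one hDpos]
    exact_mod_cast hdeg a
  have hfinner := finner_inequality (m := m) (fun _ => by positivity) hcover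
    (f := fun e x => ‖f e x‖ₑ ^ (q.toReal * D))
    (fun e => (hf e).enorm.pow_const _) (fun e x y hxy => by simp only [hfS e hxy])
  simp only [← ENNReal.rpow_mul, mul_inv_cancel_right₀ hDpos.ne'] at hfinner
  simp_rw [eLpNorm_eq_lintegral_rpow_enorm_toReal hq0 hqtop,
    eLpNorm_eq_lintegral_rpow_enorm_toReal (mul_ne_zero hq0 (Nat.cast_ne_zero.2 hD))
      (ENNReal.mul_ne_top hqtop (ENNReal.natCast_ne_top D)), ENNReal.toReal_mul,
    ENNReal.toReal_natCast, enorm_finsetProd, ← ENNReal.prod_rpow_of_nonneg ENNReal.toReal_nonneg]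
  refine (ENNReal.rpow_le_rpow hfinner (by positivity)).trans_eq ?_
  rw [← ENNReal.prod_rpow_of_nonneg (by positivity)]
  refine Finset.prod_congr rfl fun e _ => ?_
  rw [← ENNReal.rpow_mul]
  congr 1
  field_simp

end Finner

section EdgeProd

theorem card_edges_incident_le_maxDegree {v : ℕ} (G : SimpleGraph (Fin v)) [DecidableRel G.Adj]
    (a : Fin v) :
    ((Finset.univ.filter fun p : Fin v × Fin v => G.Adj p.1 p.2 ∧ p.1 < p.2).filter
      fun p => a ∈ ({p.1, p.2} : Finset (Fin v))).card ≤ G.maxDegree := by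
  refine le_trans ?_ (G.degree_le_maxDegree a)
  rw [← SimpleGraph.card_neighborFinset_eq_degree]
  refine Finset.card_le_card_of_injOn (fun p => if p.1 = a then p.2 else p.1) ?_ ?_
  · rintro ⟨b, c⟩ hbc
    simp only [Finset.coe_filter, Finset.mem_filter, Finset.mem_univ, true_and, mem_ofPred_eq,
      Finset.mem_insert, Finset.mem_singleton, SimpleGraph.coe_neighborFinset,
      SimpleGraph.mem_neighborSet] at hbc ⊢
    obtain ⟨⟨hadj, hlt⟩, rfl | rfl⟩ := hbc
    · simpa using hadj
    · simpa [hlt.ne] using hadj.symm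
  · rintro ⟨b, c⟩ hbc ⟨b', c'⟩ hbc' heq
    simp only [Finset.coe_filter, Finset.mem_filter, Finset.mem_univ, true_and, mem_ofPred_eq,
      Finset.mem_insert, Finset.mem_singleton] at hbc hbc' heq
    rw [Prod.mk.injEq]
    grind

theorem measurePreserving_eval_pair {ι : Type*} [Fintype ι] {X : ι → Type*}
    [∀ i, MeasurableSpace (X i)] (m : ∀ i, Measure (X i)) [∀ i, IsProbabilityMeasure (m i)]
    {i j : ι} (hij : i ≠ j) :
    MeasurePreserving (fun x : ∀ i, X i => (x i, x j)) (Measure.pi m) ((m i).prod (m j)) := by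
  refine ⟨by fun_prop, ?_⟩
  have hindep : ProbabilityTheory.IndepFun (Function.eval i) (Function.eval j) (Measure.pi m) :=
    (ProbabilityTheory.iIndepFun_pi (X := fun _ x => x) fun _ => aemeasurable_id).indepFun hij
  rw [← (measurePreserving_eval m i).map_eq, ← (measurePreserving_eval m j).map_eq]
  exact (ProbabilityTheory.indepFun_iff_map_prod_eq_prod_map_map
    (measurable_pi_apply i).aemeasurable (measurable_pi_apply j).aemeasurable).1 hindep

theorem eLpNorm_edgeProd_le {v : ℕ} (G : SimpleGraph (Fin v)) [DecidableRel G.Adj] {A : Type*}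
    [MeasurableSpace A] (ν : Measure A) [IsProbabilityMeasure ν] {W : A → A → ℝ}
    (hW : Measurable fun z : A × A => W z.1 z.2) (q : ℝ≥0∞) :
    eLpNorm (fun y : Fin v → A => edgeProd G fun a b => W (y a) (y b)) q (Measure.pi fun _ => ν) ≤
      eLpNorm (fun z : A × A => W z.1 z.2) (q * G.maxDegree) (ν.prod ν) ^ edgeCard G := by
  have hdeg := card_edges_incident_le_maxDegree G
  unfold edgeProd edgeCard
  set E := Finset.univ.filter fun p : Fin v × Fin v => G.Adj p.1 p.2 ∧ p.1 < p.2
  rcases eq_or_ne G.maxDegree 0 with hD | hD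
  · have hempty : E = ∅ := Finset.eq_empty_of_forall_notMem fun p hp => by
      refine absurd (hdeg p.1) (not_le.2 (hD ▸ Finset.card_pos.2 ⟨p, ?_⟩))
      simp [hp]
    have hone := eLpNorm_le_of_ae_bound (p := q) (f := fun _ : Fin v → A => (1 : ℝ)) (C := 1)
      (μ := Measure.pi fun _ => ν) (ae_of_all _ fun _ => norm_one.le)
    simpa only [hempty, Finset.prod_empty, Finset.card_empty, pow_zero, measure_univ,
      ENNReal.one_rpow, one_mul, ENNReal.ofReal_one] using hone
  have hmeas (p : Fin v × Fin v) : Measurable fun y : Fin v → A => W (y p.1) (y p.2) :=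
    hW.comp (f := fun y : Fin v → A => (y p.1, y p.2)) (by fun_prop)
  calc eLpNorm (fun y : Fin v → A => ∏ p ∈ E, W (y p.1) (y p.2)) q (Measure.pi fun _ => ν)
      ≤ ∏ p ∈ E, eLpNorm (fun y : Fin v → A => W (y p.1) (y p.2)) (q * G.maxDegree)
          (Measure.pi fun _ => ν) := by
        refine eLpNorm_prod_le_of_dependsOn hD hdeg hmeas (fun p y z hyz => ?_) q
        simp only [hyz p.1 (by simp), hyz p.2 (by simp)]
    _ = ∏ _p ∈ E, eLpNorm (fun z : A × A => W z.1 z.2) (q * G.maxDegree) (ν.prod ν) := by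
        refine Finset.prod_congr rfl fun p hp => ?_
        have hpair : MeasurePreserving (fun y : Fin v → A => (y p.1, y p.2))
            (Measure.pi fun _ => ν) (ν.prod ν) :=
          measurePreserving_eval_pair (fun _ => ν) (Finset.mem_filter.1 hp).2.2.ne
        rw [← eLpNorm_comp_measurePreserving hW.aestronglyMeasurable hpair]
        rfl
    _ = eLpNorm (fun z : A × A => W z.1 z.2) (q * G.maxDegree) (ν.prod ν) ^ E.card :=
        Finset.prod_const _

end EdgeProd

section StepKernel

/-- The index of the cell `(i/n, (i+1)/n]` containing `x`, for `x ∈ (0, 1]`; this is `⌈n x⌉`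
shifted to start from `0`. -/
noncomputable def cellIndex (n : ℕ) [NeZero n] (x : ℝ) : Fin n :=
  Fin.ofNat n (⌈n * x⌉₊ - 1)

variable (n : ℕ) [NeZero n]

theorem measurable_cellIndex : Measurable (cellIndex n) :=
  (measurable_from_top (f := fun k : ℕ => Fin.ofNat n (k - 1))).comp
    (Nat.measurable_ceil.comp (measurable_const_mul _))

theorem mem_Ioc_iff_cellIndex_eq {x : ℝ} (hx : x ∈ Ioc 0 1) (i : Fin n) :
    x ∈ Ioc (((i : ℕ) : ℝ) / n) ((((i : ℕ) : ℝ) + 1) / n) ↔ cellIndex n x = i := by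
  have hn : (0 : ℝ) < n := Nat.cast_pos.2 (NeZero.pos n)
  have hpos : 0 < ⌈n * x⌉₊ := Nat.ceil_pos.2 (mul_pos hn hx.1)
  have hle : ⌈n * x⌉₊ ≤ n := Nat.ceil_le.2 (mul_le_of_le_one_right hn.le hx.2)
  have hval : (cellIndex n x : ℕ) = ⌈n * x⌉₊ - 1 := Nat.mod_eq_of_lt (by omega)
  rw [mem_Ioc, div_lt_iff₀' hn, le_div_iff₀' hn, Fin.ext_iff, hval, ← Nat.lt_ceil,
    ← Nat.cast_add_one, ← Nat.ceil_le]
  omega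

theorem ae_unif01_mem_Ioc : ∀ᵐ x ∂unif01, x ∈ Ioc (0 : ℝ) 1 := by
  rw [unif01, ← restrict_Ioc_eq_restrict_Icc]
  exact ae_restrict_mem measurableSet_Ioc

theorem measurePreserving_cellIndex :
    MeasurePreserving (cellIndex n) unif01 (ProbabilityTheory.uniformOn univ) := by
  refine ⟨measurable_cellIndex n, Measure.ext_of_singleton fun i => ?_⟩
  have hn : (0 : ℝ) < n := Nat.cast_pos.2 (NeZero.pos n)
  have hi : (((i : ℕ) : ℝ) + 1) / n ≤ 1 := (div_le_one hn).2 (by exact_mod_cast i.2)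
  have hcell : cellIndex n ⁻¹' {i} =ᵐ[unif01]
      Ioc (((i : ℕ) : ℝ) / n) ((((i : ℕ) : ℝ) + 1) / n) := by
    filter_upwards [ae_unif01_mem_Ioc] with x hx
    exact propext (mem_Ioc_iff_cellIndex_eq n hx i).symm
  rw [Measure.map_apply (measurable_cellIndex n) (measurableSet_singleton i), measure_congr hcell,
    unif01, Measure.restrict_apply measurableSet_Ioc, inter_eq_left.2, Real.volume_Ioc,
    ProbabilityTheory.uniformOn_univ, Measure.count_singleton, ← sub_div, add_sub_cancel_left,
    Fintype.card_fin, ENNReal.ofReal_div_of_pos hn]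
  · simp
  · exact fun x hx => ⟨(by positivity : (0 : ℝ) ≤ _).trans hx.1.le, hx.2.trans hi⟩

theorem kerNorm_stepKernel (Q : Fin n → Fin n → ℝ) (r : ℝ≥0∞) :
    kerNorm (stepKernel n Q) r = eLpNorm (fun z : Fin n × Fin n => Q z.1 z.2) r
      ((ProbabilityTheory.uniformOn univ).prod (ProbabilityTheory.uniformOn univ)) := by
  have hcell := measurePreserving_cellIndex n
  have hae : ∀ᵐ z : ℝ × ℝ ∂unif01.prod unif01, z.1 ∈ Ioc (0 : ℝ) 1 ∧ z.2 ∈ Ioc (0 : ℝ) 1 :=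
    (Measure.quasiMeasurePreserving_fst.ae ae_unif01_mem_Ioc).and
      (Measure.quasiMeasurePreserving_snd.ae ae_unif01_mem_Ioc)
  rw [← eLpNorm_comp_measurePreserving (measurable_of_countable _).aestronglyMeasurable
    (hcell.prod hcell), kerNorm]
  refine eLpNorm_congr_ae ?_
  filter_upwards [hae] with z hz
  simp only [stepKernel, mem_Ioc_iff_cellIndex_eq n hz.1, mem_Ioc_iff_cellIndex_eq n hz.2,
    ite_and, Finset.sum_ite_eq, Finset.mem_univ, if_true, Function.comp_apply, Prod.map_fst,
    Prod.map_snd, Finset.sum_ite_irrel, Finset.sum_const_zero]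

end StepKernel

section ExpGrowth

open ExpGrowth ProbabilityTheory Topology

theorem limsup_inv_mul_log_eq_expGrowthSup (u : ℕ → ℝ≥0∞) :
    limsup (fun n : ℕ => (((n : ℝ)⁻¹ : ℝ) : EReal) * ENNReal.log (u n)) atTop =
      expGrowthSup u := by
  simp only [expGrowthSup, EReal.div_eq_inv_mul, EReal.coe_inv, EReal.coe_natCast]

variable {X : Type*} {Y h : X → ℝ}

/-- The average of `Y` over the sample `x₁, …, xₙ` (equal to `0` for the empty sample). -/
noncomputable def sampleMean {n : ℕ} (Y : X → ℝ) (x : Fin n → X) : ℝ :=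
  (∑ j, Y (x j)) / n

theorem sampleMean_nonneg (hY : ∀ x, 0 ≤ Y x) {n : ℕ} (x : Fin n → X) : 0 ≤ sampleMean Y x :=
  div_nonneg (Finset.sum_nonneg fun j _ => hY (x j)) n.cast_nonneg

theorem mul_le_sum_of_le_sampleMean {n : ℕ} {x : Fin n → X} {t : ℝ} (h : t ≤ sampleMean Y x) :
    n * t ≤ ∑ j, Y (x j) := by
  rcases n.eq_zero_or_pos with rfl | hn
  · simp
  · exact (le_div_iff₀' (Nat.cast_pos.2 hn)).1 h

theorem exp_mul_indicator_le {l : ℝ} (hl : 0 ≤ l) (hY0 : ∀ x, 0 ≤ Y x) (s : Set X) (x : X) :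
    Real.exp (l * s.indicator Y x) ≤ Real.exp (l * Y x) := by
  gcongr
  exact indicator_le_self' (fun x _ => hY0 x) x

variable [MeasurableSpace X] {μ : Measure X}

theorem integrable_exp_mul_indicator (hY : Measurable Y) (hY0 : ∀ x, 0 ≤ Y x) {l : ℝ} (hl : 0 ≤ l)
    (hexp : Integrable (fun x => Real.exp (l * Y x)) μ) {s : Set X} (hs : MeasurableSet s) :
    Integrable (fun x => Real.exp (l * s.indicator Y x)) μ :=
  hexp.mono' ((hY.indicator hs).const_mul l).exp.aestronglyMeasurable <| ae_of_all _ fun x => by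
    simpa only [Real.norm_eq_abs, Real.abs_exp] using exp_mul_indicator_le hl hY0 s x

variable [IsProbabilityMeasure μ]

theorem integrable_exp_mul_eval_pi {ι : Type*} [Fintype ι] {l : ℝ}
    (hexp : Integrable (fun x => Real.exp (l * Y x)) μ) (j : ι) :
    Integrable (fun x : ι → X => Real.exp (l * Y (x j))) (Measure.pi fun _ => μ) :=
  (measurePreserving_eval (fun _ => μ) j).integrable_comp_of_integrable hexp

theorem iIndepFun_eval_pi (ι : Type*) [Fintype ι] (hY : Measurable Y) :
    iIndepFun (fun j (x : ι → X) => Y (x j)) (Measure.pi fun _ => μ) :=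
  iIndepFun_pi fun _ => hY.aemeasurable

theorem integrable_exp_mul_sum_pi {ι : Type*} [Fintype ι] (hY : Measurable Y) {l : ℝ}
    (hexp : Integrable (fun x => Real.exp (l * Y x)) μ) :
    Integrable (fun x : ι → X => Real.exp (l * ∑ j, Y (x j))) (Measure.pi fun _ => μ) := by
  simpa only [Finset.sum_apply] using (iIndepFun_eval_pi ι hY).integrable_exp_mul_sum
    (fun j => hY.comp (measurable_pi_apply j)) (s := Finset.univ)
    fun j _ => integrable_exp_mul_eval_pi hexp j

theorem cgf_sum_pi {ι : Type*} [Fintype ι] (hY : Measurable Y) {l : ℝ}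
    (hexp : Integrable (fun x => Real.exp (l * Y x)) μ) :
    cgf (fun x : ι → X => ∑ j, Y (x j)) (Measure.pi fun _ => μ) l =
      Fintype.card ι * cgf Y μ l := by
  have hcgf (j : ι) : cgf (fun x : ι → X => Y (x j)) (Measure.pi fun _ => μ) l = cgf Y μ l := by
    have heval := measurePreserving_eval (fun _ : ι => μ) j
    have hmgf := mgf_map heval.aemeasurable (X := Y) (t := l) (by fun_prop)
    rw [heval.map_eq] at hmgf
    exact congrArg Real.log hmgf.symm
  have hsum : (fun x : ι → X => ∑ j, Y (x j)) = ∑ j, fun x : ι → X => Y (x j) := by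
    ext x
    rw [Finset.sum_apply]
  rw [hsum, (iIndepFun_eval_pi ι hY).cgf_sum (fun j => hY.comp (measurable_pi_apply j))
    fun j _ => integrable_exp_mul_eval_pi hexp j]
  simp only [hcgf, Finset.sum_const, Finset.card_univ, nsmul_eq_mul]

theorem expGrowthSup_sampleMean_ge_le (hY : Measurable Y) {l : ℝ} (hl : 0 ≤ l)
    (hexp : Integrable (fun x => Real.exp (l * Y x)) μ) (t : ℝ) :
    expGrowthSup (fun n => (Measure.pi fun _ : Fin n => μ) {x | t ≤ sampleMean Y x}) ≤
      ((cgf Y μ l - l * t : ℝ) : EReal) := by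
  refine Eventually.expGrowthSup_le (Eventually.of_forall fun n => ?_)
  have hcgf := cgf_sum_pi (ι := Fin n) hY hexp
  rw [Fintype.card_fin] at hcgf
  calc (Measure.pi fun _ : Fin n => μ) {x | t ≤ sampleMean Y x}
      ≤ (Measure.pi fun _ : Fin n => μ) {x | n * t ≤ ∑ j, Y (x j)} :=
        measure_mono fun _ => mul_le_sum_of_le_sampleMean
    _ ≤ ENNReal.ofReal (Real.exp (-l * (n * t) + n * cgf Y μ l)) := by
        rw [← ofReal_measureReal, ← hcgf]
        exact ENNReal.ofReal_le_ofReal <|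
          measure_ge_le_exp_cgf _ hl (integrable_exp_mul_sum_pi hY hexp)
    _ = EReal.exp (((cgf Y μ l - l * t : ℝ) : EReal) * n) := by
        rw [← EReal.coe_natCast, ← EReal.coe_mul, EReal.exp_coe]
        ring_nf

theorem tendsto_expGrowthSup_sampleMean_ge_atTop (hY : Measurable Y)
    (hexp : ∀ l, 0 < l → Integrable (fun x => Real.exp (l * Y x)) μ) :
    Tendsto (fun L => expGrowthSup fun n =>
      (Measure.pi fun _ : Fin n => μ) {x | L ≤ sampleMean Y x}) atTop (𝓝 ⊥) := by
  refine EReal.tendsto_nhds_bot_iff_real.2 fun b => ?_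
  filter_upwards [eventually_gt_atTop (cgf Y μ 1 - b)] with L hL
  refine (expGrowthSup_sampleMean_ge_le hY zero_le_one (hexp 1 one_pos) L).trans_lt ?_
  exact_mod_cast (by linarith : cgf Y μ 1 - 1 * L < b)

theorem tendsto_cgf_indicator_lt_atTop (hY : Measurable Y) (hY0 : ∀ x, 0 ≤ Y x) (hh : Measurable h)
    {l : ℝ} (hl : 0 ≤ l) (hexp : Integrable (fun x => Real.exp (l * Y x)) μ) :
    Tendsto (fun T => cgf ({x | T < h x}.indicator Y) μ l) atTop (𝓝 0) := by
  have hmgf : Tendsto (fun T => mgf ({x | T < h x}.indicator Y) μ l) atTop (𝓝 1) := by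
    have hone : (1 : ℝ) = ∫ _, 1 ∂μ := by simp
    rw [hone]
    refine tendsto_integral_filter_of_dominated_convergence _ ?_ ?_ hexp (ae_of_all _ fun x => ?_)
    · exact Eventually.of_forall fun T => ((hY.indicator
        (measurableSet_lt measurable_const hh)).const_mul l).exp.aestronglyMeasurable
    · refine Eventually.of_forall fun T => ae_of_all _ fun x => ?_
      simpa only [Real.norm_eq_abs, Real.abs_exp] using exp_mul_indicator_le hl hY0 _ x
    · refine tendsto_const_nhds.congr' ?_
      filter_upwards [eventually_ge_atTop (h x)] with T hT
      rw [indicator_of_notMem (s := {x | T < h x}) (not_lt.2 hT), mul_zero, Real.exp_zero]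
  simpa only [cgf, Real.log_one] using hmgf.log one_ne_zero

theorem tendsto_expGrowthSup_sampleMean_indicator_ge (hY : Measurable Y) (hY0 : ∀ x, 0 ≤ Y x)
    (hh : Measurable h) (hexp : ∀ l, 0 < l → Integrable (fun x => Real.exp (l * Y x)) μ)
    {ε : ℝ} (hε : 0 < ε) :
    Tendsto (fun T => expGrowthSup fun n => (Measure.pi fun _ : Fin n => μ)
      {x | ε ≤ sampleMean ({x | T < h x}.indicator Y) x}) atTop (𝓝 ⊥) := by
  refine EReal.tendsto_nhds_bot_iff_real.2 fun b => ?_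
  obtain ⟨l, hl, hlb⟩ : ∃ l : ℝ, 0 < l ∧ 0 - l * ε < b :=
    ⟨(|b| + 1) / ε, by positivity, by
      rw [div_mul_cancel₀ _ hε.ne']
      linarith [neg_abs_le b]⟩
  have hcgf := tendsto_cgf_indicator_lt_atTop hY hY0 hh hl.le (hexp l hl)
  filter_upwards [(hcgf.sub_const (l * ε)).eventually_lt_const hlb] with T hT
  have hT_meas : MeasurableSet {x | T < h x} := measurableSet_lt measurable_const hh
  exact (expGrowthSup_sampleMean_ge_le (hY.indicator hT_meas) hl.le
    (integrable_exp_mul_indicator hY hY0 hl.le (hexp l hl) hT_meas) ε).trans_lt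
    (EReal.coe_lt_coe_iff.2 hT)

theorem tendsto_expGrowthSup_mul_sampleMean_indicator_ge (hY : Measurable Y) (hY0 : ∀ x, 0 ≤ Y x)
    (hh : Measurable h) (hexp : ∀ l, 0 < l → Integrable (fun x => Real.exp (l * Y x)) μ)
    {c η : ℝ} (hc : 0 ≤ c) (hη : 0 < η) (k : ℕ) :
    Tendsto (fun T => expGrowthSup fun n => (Measure.pi fun _ : Fin n => μ)
      {x | η ≤ c * sampleMean ({x | T < h x}.indicator Y) x * sampleMean Y x ^ k})
      atTop (𝓝 ⊥) := by
  refine EReal.tendsto_nhds_bot_iff_real.2 fun b => ?_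
  obtain ⟨L, hL, hLpos⟩ := ((EReal.tendsto_nhds_bot_iff_real.1
    (tendsto_expGrowthSup_sampleMean_ge_atTop hY hexp) b).and (eventually_gt_atTop 0)).exists
  have hε : 0 < η / (c * L ^ k + 1) := by positivity
  filter_upwards [EReal.tendsto_nhds_bot_iff_real.1
    (tendsto_expGrowthSup_sampleMean_indicator_ge hY hY0 hh hexp hε) b] with T hT
  refine lt_of_le_of_lt (expGrowthSup_monotone fun n => ?_)
    (expGrowthSup_add.trans_lt (max_lt hT hL))
  refine (measure_mono fun x hx => ?_).trans (measure_union_le _ _)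
  by_contra hlt
  simp only [mem_union, mem_ofPred_eq, not_or, not_le] at hx hlt
  refine absurd hx (not_le.2 ?_)
  calc c * sampleMean ({x | T < h x}.indicator Y) x * sampleMean Y x ^ k
      ≤ c * (η / (c * L ^ k + 1)) * L ^ k := by
        have hYmean := sampleMean_nonneg hY0 x
        gcongr
        exacts [hlt.1.le, hlt.2.le]
    _ < η := by
        rw [mul_right_comm, mul_div_assoc', div_lt_iff₀ (by positivity)]
        linarith

end ExpGrowth

section TailMoment

open ProbabilityTheory

variable {ι α : Type*} [Fintype ι]

theorem exists_lt_of_lt_of_le_prod {M T : ℝ≥0∞} (hTM : T ^ Fintype.card ι ≤ M) {F : ℝ≥0∞}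
    (hMF : M < F) {w : ι → ℝ≥0∞} (hF : F ≤ ∏ a, w a) : ∃ a, T < w a := by
  by_contra! hle
  refine absurd (hMF.trans_le hF) (not_lt.2 (le_trans ?_ hTM))
  simpa using Finset.prod_le_prod' fun a (_ : a ∈ Finset.univ) => hle a

theorem indicator_lt_rpow_le_sum_prod [DecidableEq ι] {s : ℝ} (hs : 0 ≤ s) {M T : ℝ≥0∞}
    (hTM : T ^ Fintype.card ι ≤ M) {Ψ : α → ℝ≥0∞} {F : (ι → α) → ℝ≥0∞}
    (hF : ∀ y, F y ≤ ∏ a, Ψ (y a)) (y : ι → α) :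
    {y | M < F y}.indicator (fun y => F y ^ s) y ≤
      ∑ a, ∏ b, (if b = a then {z | T < Ψ z}.indicator fun z => Ψ z ^ s else fun z => Ψ z ^ s)
        (y b) := by
  refine indicator_apply_le' (fun hy => ?_) fun _ => zero_le
  obtain ⟨a, ha⟩ := exists_lt_of_lt_of_le_prod hTM hy (hF y)
  calc F y ^ s ≤ ∏ b, Ψ (y b) ^ s := by
        rw [ENNReal.prod_rpow_of_nonneg hs]
        exact ENNReal.rpow_le_rpow (hF y) hs
    _ = ∏ b, (if b = a then {z | T < Ψ z}.indicator fun z => Ψ z ^ s else fun z => Ψ z ^ s)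
          (y b) := by
        refine Finset.prod_congr rfl fun b _ => ?_
        split_ifs with hb
        · rw [hb, indicator_of_mem (s := {z | T < Ψ z}) ha]
        · rfl
    _ ≤ _ := Finset.single_le_sum (f := fun a => ∏ b, (if b = a then
          {z | T < Ψ z}.indicator fun z => Ψ z ^ s else fun z => Ψ z ^ s) (y b))
          (fun _ _ => zero_le) (Finset.mem_univ a)

theorem lintegral_prod_eval_pi {X : ι → Type*} [∀ i, MeasurableSpace (X i)]
    (m : ∀ i, Measure (X i)) [∀ i, IsProbabilityMeasure (m i)] {f : ∀ i, X i → ℝ≥0∞}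
    (hf : ∀ i, Measurable (f i)) :
    ∫⁻ x, ∏ i, f i (x i) ∂Measure.pi m = ∏ i, ∫⁻ x, f i x ∂m i := by
  rw [lintegral_prod_eq_prod_lintegral_of_indepFun Finset.univ _
    (iIndepFun_pi fun i => (hf i).aemeasurable) fun i => (hf i).comp (measurable_pi_apply i)]
  exact Finset.prod_congr rfl fun i _ => (measurePreserving_eval m i).lintegral_comp (hf i)

variable [MeasurableSpace α]

theorem lintegral_pi_indicator_lt_rpow_le (ν : Measure α) [IsProbabilityMeasure ν] {s : ℝ}
    (hs : 0 ≤ s) {M T : ℝ≥0∞} (hTM : T ^ Fintype.card ι ≤ M) {Ψ : α → ℝ≥0∞} (hΨ : Measurable Ψ)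
    {F : (ι → α) → ℝ≥0∞} (hF : ∀ y, F y ≤ ∏ a, Ψ (y a)) :
    ∫⁻ y, {y | M < F y}.indicator (fun y => F y ^ s) y ∂Measure.pi (fun _ => ν) ≤
      Fintype.card ι * (∫⁻ z, {z | T < Ψ z}.indicator (fun z => Ψ z ^ s) z ∂ν) *
        (∫⁻ z, Ψ z ^ s ∂ν) ^ (Fintype.card ι - 1) := by
  classical
  have hmeas (a b : ι) : Measurable
      (if b = a then {z | T < Ψ z}.indicator fun z => Ψ z ^ s else fun z => Ψ z ^ s) := by
    split_ifs
    · exact (hΨ.pow_const s).indicator (measurableSet_lt measurable_const hΨ)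
    · exact hΨ.pow_const s
  have hmeas_prod (a : ι) : Measurable fun y : ι → α => ∏ b,
      (if b = a then {z | T < Ψ z}.indicator fun z => Ψ z ^ s else fun z => Ψ z ^ s) (y b) :=
    Finset.measurable_fun_prod _ fun b _ => (hmeas a b).comp (measurable_pi_apply b)
  have hterm (a : ι) : ∏ b, ∫⁻ z, (if b = a then {z | T < Ψ z}.indicator fun z => Ψ z ^ s
      else fun z => Ψ z ^ s) z ∂ν = (∫⁻ z, {z | T < Ψ z}.indicator (fun z => Ψ z ^ s) z ∂ν) *
        (∫⁻ z, Ψ z ^ s ∂ν) ^ (Fintype.card ι - 1) := by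
    rw [← Finset.mul_prod_erase _ _ (Finset.mem_univ a), if_pos rfl, Finset.prod_congr rfl
      fun b hb => by rw [if_neg (Finset.ne_of_mem_erase hb)], Finset.prod_const,
      Finset.card_erase_of_mem (Finset.mem_univ a), Finset.card_univ]
  refine (lintegral_mono (indicator_lt_rpow_le_sum_prod hs hTM hF)).trans_eq ?_
  rw [lintegral_finsetSum _ fun a _ => hmeas_prod a]
  simp only [lintegral_prod_eval_pi (fun _ => ν) (hmeas _), hterm, Finset.sum_const,
    Finset.card_univ, nsmul_eq_mul, mul_assoc]

end TailMoment

section TupleStat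

open ProbabilityTheory

theorem eLpNorm_one_mul_le {α : Type*} [MeasurableSpace α] {ν : Measure α}
    [IsProbabilityMeasure ν] {f g : α → ℝ} (hf : AEStronglyMeasurable f ν)
    (hg : AEStronglyMeasurable g ν) {p q : ℝ≥0∞} (hpq : p⁻¹ + q⁻¹ ≤ 1) :
    eLpNorm (fun x => f x * g x) 1 ν ≤ eLpNorm f p ν * eLpNorm g q ν := by
  have hr : (1 : ℝ≥0∞) ≤ (p⁻¹ + q⁻¹)⁻¹ := ENNReal.one_le_inv.2 hpq
  have : ENNReal.HolderTriple p q (p⁻¹ + q⁻¹)⁻¹ := ⟨(inv_inv _).symm⟩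
  calc eLpNorm (fun x => f x * g x) 1 ν ≤ eLpNorm (f • g) (p⁻¹ + q⁻¹)⁻¹ ν :=
        eLpNorm_le_eLpNorm_of_exponent_le hr (hf.mul hg)
    _ ≤ eLpNorm f p ν * eLpNorm g q ν := eLpNorm_smul_le_mul_eLpNorm hg hf

theorem lintegral_uniformOn_univ {Ω : Type*} [Fintype Ω] [MeasurableSpace Ω]
    [MeasurableSingletonClass Ω] (f : Ω → ℝ≥0∞) :
    ∫⁻ ω, f ω ∂uniformOn univ = (∑ ω, f ω) / Fintype.card Ω := by
  rw [uniformOn, ProbabilityTheory.cond, Measure.restrict_univ, lintegral_smul_measure,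
    lintegral_count, tsum_fintype, Measure.count_univ, ENat.card_eq_coe_fintype_card, smul_eq_mul,
    ENNReal.div_eq_inv_mul]
  rfl

theorem enorm_sum_div_card_le_eLpNorm {Ω : Type*} [Fintype Ω] [Nonempty Ω] [MeasurableSpace Ω]
    [MeasurableSingletonClass Ω] (S : Finset Ω) (f : Ω → ℝ) :
    ‖(∑ ω ∈ S, f ω) / Fintype.card Ω‖ₑ ≤ eLpNorm f 1 (uniformOn univ) := by
  have hcard : (0 : ℝ) < Fintype.card Ω := Nat.cast_pos.2 Fintype.card_pos
  rw [eLpNorm_one_eq_lintegral_enorm, lintegral_uniformOn_univ, Real.enorm_eq_ofReal_abs, abs_div,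
    Nat.abs_cast, ENNReal.ofReal_div_of_pos hcard, ENNReal.ofReal_natCast,
    ← Real.enorm_eq_ofReal_abs]
  gcongr
  exact (enorm_sum_le S f).trans (Finset.sum_le_univ_sum_of_nonneg fun _ => zero_le)

theorem lintegral_uniformOn_ofReal_eq_sampleMean {X : Type*} {n : ℕ} [NeZero n] {Y : X → ℝ}
    (hY : ∀ x, 0 ≤ Y x) (x : Fin n → X) :
    ∫⁻ j, ENNReal.ofReal (Y (x j)) ∂uniformOn univ = ENNReal.ofReal (sampleMean Y x) := by
  have hn : (0 : ℝ) < n := Nat.cast_pos.2 (NeZero.pos n)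
  rw [lintegral_uniformOn_univ, sampleMean, ENNReal.ofReal_div_of_pos hn,
    ENNReal.ofReal_sum_of_nonneg fun j _ => hY (x j), ENNReal.ofReal_natCast, Fintype.card_fin]

theorem eLpNorm_indicator_lt_abs_rpow {α : Type*} [MeasurableSpace α] (ν : Measure α) (f : α → ℝ)
    {p : ℝ≥0∞} (hp0 : p ≠ 0) (hptop : p ≠ ⊤) {M : ℝ} (hM : 0 ≤ M) :
    eLpNorm ({y | M < |f y|}.indicator f) p ν ^ p.toReal =
      ∫⁻ y, {y | ENNReal.ofReal M < ‖f y‖ₑ}.indicator (fun y => ‖f y‖ₑ ^ p.toReal) y ∂ν := by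
  have hs : 0 < p.toReal := ENNReal.toReal_pos hp0 hptop
  rw [eLpNorm_eq_lintegral_rpow_enorm_toReal hp0 hptop, ← ENNReal.rpow_mul,
    one_div_mul_cancel hs.ne', ENNReal.rpow_one]
  refine lintegral_congr fun y => ?_
  have hiff : ENNReal.ofReal M < ‖f y‖ₑ ↔ M < |f y| := by
    rw [Real.enorm_eq_ofReal_abs, ENNReal.ofReal_lt_ofReal_iff_of_nonneg hM]
  simp only [indicator_apply, mem_ofPred_eq, hiff]
  split_ifs
  · rfl
  · rw [enorm_zero, ENNReal.zero_rpow_of_pos hs]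

/-- The common form `n⁻ᵛ ∑_{i ∈ S} φ(x_{i₁}, …, x_{i_v}) ∏_{(a,b) ∈ E(G)} Q(i_a, i_b)` of `Vstat`
(all tuples) and `Ustat` (injective tuples). -/
noncomputable def tupleStat {X : Type*} {v n : ℕ} (G : SimpleGraph (Fin v)) [DecidableRel G.Adj]
    (S : Finset (Fin v → Fin n)) (φ : (Fin v → X) → ℝ) (Q : Fin n → Fin n → ℝ) (x : Fin n → X) :
    ℝ :=
  (∑ i ∈ S, φ (x ∘ i) * edgeProd G fun a b => Q (i a) (i b)) / (n : ℝ) ^ v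

variable {X : Type*} {v n : ℕ} (G : SimpleGraph (Fin v)) [DecidableRel G.Adj]

theorem tupleStat_sub_truncation (S : Finset (Fin v → Fin n)) (φ : (Fin v → X) → ℝ) (M : ℝ)
    (Q : Fin n → Fin n → ℝ) (x : Fin n → X) :
    tupleStat G S φ Q x - tupleStat G S (fun y => if |φ y| ≤ M then φ y else 0) Q x =
      tupleStat G S ({y | M < |φ y|}.indicator φ) Q x := by
  rw [tupleStat, tupleStat, tupleStat, ← sub_div, ← Finset.sum_sub_distrib]
  congr 1
  refine Finset.sum_congr rfl fun i _ => ?_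
  rw [← sub_mul]
  congr 1
  by_cases h : |φ (x ∘ i)| ≤ M
  · rw [if_pos h, sub_self, indicator_of_notMem (s := {y | M < |φ y|}) (not_lt.2 h)]
  · rw [if_neg h, sub_zero, indicator_of_mem (s := {y | M < |φ y|}) (not_le.1 h)]

theorem enorm_tupleStat_le [NeZero n] {p q : ℝ≥0∞} (hpq : p⁻¹ + q⁻¹ ≤ 1)
    (S : Finset (Fin v → Fin n)) (φ : (Fin v → X) → ℝ) (Q : Fin n → Fin n → ℝ) (x : Fin n → X) :
    ‖tupleStat G S φ Q x‖ₑ ≤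
      eLpNorm (fun i : Fin v → Fin n => φ (x ∘ i)) p (Measure.pi fun _ => uniformOn univ) *
        kerNorm (stepKernel n Q) (q * G.maxDegree) ^ edgeCard G := by
  have hpi : (uniformOn univ : Measure (Fin v → Fin n)) = Measure.pi fun _ => uniformOn univ := by
    rw [← uniformOn_pi, pi_univ]
  have hcard : (Fintype.card (Fin v → Fin n) : ℝ) = (n : ℝ) ^ v := by simp
  have hmeas (f : (Fin v → Fin n) → ℝ) :
      AEStronglyMeasurable f (Measure.pi fun _ => uniformOn univ) :=
    (measurable_of_countable f).aestronglyMeasurable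
  rw [tupleStat, ← hcard, kerNorm_stepKernel]
  refine (enorm_sum_div_card_le_eLpNorm S _).trans ?_
  rw [hpi]
  refine (eLpNorm_one_mul_le (hmeas _) (hmeas _) hpq).trans ?_
  gcongr
  exact eLpNorm_edgeProd_le G (uniformOn univ) (measurable_of_countable _) q

theorem ofReal_lt_indicator_rpow {X : Type*} {ψ : X → ℝ} (hψ : ∀ x, 0 ≤ ψ x) {s : ℝ}
    (hs : 0 ≤ s) {T : ℝ} (hT : 0 ≤ T) (z : X) :
    {z | ENNReal.ofReal T < ENNReal.ofReal (ψ z)}.indicator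
      (fun z => ENNReal.ofReal (ψ z) ^ s) z =
      ENNReal.ofReal ({z | T < ψ z}.indicator (fun z => ψ z ^ s) z) := by
  simp only [indicator_apply, mem_ofPred_eq, ENNReal.ofReal_lt_ofReal_iff_of_nonneg hT,
    ENNReal.ofReal_rpow_of_nonneg (hψ z) hs, apply_ite ENNReal.ofReal, ENNReal.ofReal_zero]

theorem eLpNorm_tail_rpow_le [NeZero n] {φ : (Fin v → X) → ℝ} {ψ : X → ℝ} (hψ : ∀ x, 0 ≤ ψ x)
    (hdom : ∀ y, |φ y| ≤ ∏ a, ψ (y a)) {p : ℝ≥0∞} (hp0 : p ≠ 0) (hptop : p ≠ ⊤) {M T : ℝ}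
    (hT : 0 ≤ T) (hTM : T ^ v ≤ M) (x : Fin n → X) :
    eLpNorm (fun i : Fin v → Fin n => {y | M < |φ y|}.indicator φ (x ∘ i)) p
        (Measure.pi fun _ => uniformOn univ) ^ p.toReal ≤
      ENNReal.ofReal (v * sampleMean ({z | T < ψ z}.indicator fun z => ψ z ^ p.toReal) x *
        sampleMean (fun z => ψ z ^ p.toReal) x ^ (v - 1)) := by
  have hs : 0 < p.toReal := ENNReal.toReal_pos hp0 hptop
  have hY (z : X) : 0 ≤ ψ z ^ p.toReal := Real.rpow_nonneg (hψ z) _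
  have hZ (z : X) : 0 ≤ {z | T < ψ z}.indicator (fun z => ψ z ^ p.toReal) z :=
    indicator_nonneg (fun z _ => hY z) z
  have hmain := lintegral_pi_indicator_lt_rpow_le (ι := Fin v) (uniformOn (univ : Set (Fin n)))
    hs.le (M := ENNReal.ofReal M) (T := ENNReal.ofReal T) (Ψ := fun j => ENNReal.ofReal (ψ (x j)))
    (F := fun i => ‖φ (x ∘ i)‖ₑ)
    (by rw [Fintype.card_fin, ← ENNReal.ofReal_pow hT]; exact ENNReal.ofReal_le_ofReal hTM)
    (measurable_of_countable _) fun i => by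
      rw [Real.enorm_eq_ofReal_abs, ← ENNReal.ofReal_prod_of_nonneg fun a _ => hψ _]
      exact ENNReal.ofReal_le_ofReal (hdom _)
  calc eLpNorm (fun i : Fin v → Fin n => {y | M < |φ y|}.indicator φ (x ∘ i)) p
          (Measure.pi fun _ => uniformOn univ) ^ p.toReal
    _ = _ := eLpNorm_indicator_lt_abs_rpow _ (fun i : Fin v → Fin n => φ (x ∘ i)) hp0 hptop
        ((pow_nonneg hT v).trans hTM)
    _ ≤ _ := hmain
    _ = v * (∫⁻ j, ENNReal.ofReal ({z | T < ψ z}.indicator (fun z => ψ z ^ p.toReal) (x j))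
          ∂uniformOn univ) *
          (∫⁻ j, ENNReal.ofReal (ψ (x j) ^ p.toReal) ∂uniformOn univ) ^ (v - 1) := by
        simp only [← ofReal_lt_indicator_rpow hψ hs.le hT, Fintype.card_fin,
          ← ENNReal.ofReal_rpow_of_nonneg (hψ _) hs.le]
        rfl
    _ = _ := by
        rw [lintegral_uniformOn_ofReal_eq_sampleMean hZ,
          lintegral_uniformOn_ofReal_eq_sampleMean hY,
          ENNReal.ofReal_mul (mul_nonneg v.cast_nonneg (sampleMean_nonneg hZ x)),
          ENNReal.ofReal_mul v.cast_nonneg, ENNReal.ofReal_pow (sampleMean_nonneg hY x),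
          ENNReal.ofReal_natCast]

end TupleStat

section Truncation

open ExpGrowth Topology

variable {X : Type*} {v : ℕ} {G : SimpleGraph (Fin v)} [DecidableRel G.Adj]
  {φ : (Fin v → X) → ℝ} {ψ : X → ℝ} {p q : ℝ≥0∞} {δ : ℝ}

theorem rpow_le_mul_sampleMean_of_le_abs_tupleStat {n : ℕ} [NeZero n]
    (hψ : ∀ x, 0 ≤ ψ x) (hdom : ∀ y, |φ y| ≤ ∏ a, ψ (y a)) (hp0 : p ≠ 0) (hptop : p ≠ ⊤)
    (hpq : p⁻¹ + q⁻¹ ≤ 1) {M T : ℝ} (hT : 0 ≤ T) (hTM : T ^ v ≤ M)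
    {S : Finset (Fin v → Fin n)} {Q : Fin n → Fin n → ℝ} {C : ℝ≥0}
    (hQ : kerNorm (stepKernel n Q) (q * G.maxDegree) ≤ C) (hδ : 0 ≤ δ) {x : Fin n → X}
    (hx : δ ≤ |tupleStat G S ({y | M < |φ y|}.indicator φ) Q x|) :
    δ ^ p.toReal ≤ v * (C ^ edgeCard G) ^ p.toReal *
      sampleMean ({z | T < ψ z}.indicator fun z => ψ z ^ p.toReal) x *
        sampleMean (fun z => ψ z ^ p.toReal) x ^ (v - 1) := by
  have hs : 0 ≤ p.toReal := ENNReal.toReal_nonneg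
  have hY (z : X) : 0 ≤ ψ z ^ p.toReal := Real.rpow_nonneg (hψ z) _
  have hZmean := sampleMean_nonneg (indicator_nonneg (s := {z | T < ψ z}) fun z _ => hY z) x
  have hYmean := sampleMean_nonneg hY x
  have hCpow : (C : ℝ≥0∞) ^ edgeCard G = ENNReal.ofReal (C ^ edgeCard G) := by
    rw [ENNReal.ofReal_pow C.coe_nonneg, ENNReal.ofReal_coe_nnreal]
  have hstat : ENNReal.ofReal δ ≤
      eLpNorm (fun i : Fin v → Fin n => {y | M < |φ y|}.indicator φ (x ∘ i)) p
        (Measure.pi fun _ => ProbabilityTheory.uniformOn univ) *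
          ENNReal.ofReal (C ^ edgeCard G) :=
    calc ENNReal.ofReal δ ≤ ‖tupleStat G S ({y | M < |φ y|}.indicator φ) Q x‖ₑ := by
          rw [Real.enorm_eq_ofReal_abs]
          exact ENNReal.ofReal_le_ofReal hx
      _ ≤ _ := enorm_tupleStat_le G hpq S _ Q x
      _ ≤ _ := by rw [← hCpow]; gcongr
  rw [← ENNReal.ofReal_le_ofReal_iff (by positivity), ← ENNReal.ofReal_rpow_of_nonneg hδ hs]
  refine (ENNReal.rpow_le_rpow hstat hs).trans ?_
  rw [ENNReal.mul_rpow_of_nonneg _ _ hs, ENNReal.ofReal_rpow_of_nonneg (by positivity) hs]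
  refine (mul_le_mul_left (eLpNorm_tail_rpow_le hψ hdom hp0 hptop hT hTM x) _).trans_eq ?_
  rw [← ENNReal.ofReal_mul (by positivity)]
  congr 1
  ring

variable [MeasurableSpace X] {μ : Measure X}

theorem TailCond.integrable_exp_mul_rpow (hTail : TailCond μ ψ p) (hψ : Measurable ψ)
    (hptop : p ≠ ⊤) {l : ℝ} (hl : 0 < l) :
    Integrable (fun x => Real.exp (l * ψ x ^ p.toReal)) μ := by
  rw [TailCond, if_neg hptop] at hTail
  refine ⟨((hψ.pow_const p.toReal).const_mul l).exp.aestronglyMeasurable, ?_⟩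
  rw [hasFiniteIntegral_iff_ofReal (ae_of_all _ fun _ => Real.exp_nonneg _)]
  exact hTail l hl

variable (μ) in
theorem expGrowthSup_tupleStat_tail_le (hψ : ∀ x, 0 ≤ ψ x)
    (hdom : ∀ y, |φ y| ≤ ∏ a, ψ (y a)) (hp0 : p ≠ 0) (hptop : p ≠ ⊤) (hpq : p⁻¹ + q⁻¹ ≤ 1)
    {M T : ℝ} (hT : 0 ≤ T) (hTM : T ^ v ≤ M) (S : ∀ n, Finset (Fin v → Fin n))
    {Q : ∀ n, Fin n → Fin n → ℝ} {C : ℝ≥0}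
    (hQ : ∀ᶠ n in atTop, kerNorm (stepKernel n (Q n)) (q * G.maxDegree) ≤ C) (hδ : 0 ≤ δ) :
    expGrowthSup (fun n => (Measure.pi fun _ : Fin n => μ)
        {x | δ ≤ |tupleStat G (S n) ({y | M < |φ y|}.indicator φ) (Q n) x|}) ≤
      expGrowthSup fun n => (Measure.pi fun _ : Fin n => μ)
        {x | δ ^ p.toReal ≤ v * (C ^ edgeCard G) ^ p.toReal *
          sampleMean ({z | T < ψ z}.indicator fun z => ψ z ^ p.toReal) x *
            sampleMean (fun z => ψ z ^ p.toReal) x ^ (v - 1)} := by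
  refine expGrowthSup_eventually_monotone ?_
  filter_upwards [hQ, eventually_ne_atTop 0] with n hQn hn
  have : NeZero n := ⟨hn⟩
  exact measure_mono fun x => rpow_le_mul_sampleMean_of_le_abs_tupleStat hψ hdom hp0 hptop hpq hT
    hTM hQn hδ

variable (μ) in
theorem tendsto_expGrowthSup_tupleStat_tail_of_bounded {B : ℝ} (hB : ∀ y, |φ y| ≤ B)
    (S : ∀ n, Finset (Fin v → Fin n)) (Q : ∀ n, Fin n → Fin n → ℝ) (hδ : 0 < δ) :
    Tendsto (fun M : ℝ => expGrowthSup fun n => (Measure.pi fun _ : Fin n => μ)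
      {x | δ ≤ |tupleStat G (S n) ({y | M < |φ y|}.indicator φ) (Q n) x|}) atTop (𝓝 ⊥) := by
  refine tendsto_const_nhds.congr' ?_
  filter_upwards [eventually_ge_atTop B] with M hM
  have htail : {y | M < |φ y|} = ∅ := eq_empty_of_forall_notMem fun y => ((hB y).trans hM).not_gt
  have hempty (n : ℕ) : {x | δ ≤ |tupleStat G (S n) ({y | M < |φ y|}.indicator φ) (Q n) x|} = ∅ :=
    eq_empty_of_forall_notMem fun x => by simp [tupleStat, htail, hδ]
  simp only [hempty, measure_empty]
  exact expGrowthSup_zero.symm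

variable [IsProbabilityMeasure μ]

theorem tendsto_expGrowthSup_tupleStat_tail_of_ne_top (hψmeas : Measurable ψ)
    (hψ : ∀ x, 0 ≤ ψ x) (hptop : p ≠ ⊤) (hTail : TailCond μ ψ p)
    (hdom : ∀ y, |φ y| ≤ ∏ a, ψ (y a)) (hpq : p⁻¹ + q⁻¹ ≤ 1)
    (S : ∀ n, Finset (Fin v → Fin n)) {Q : ∀ n, Fin n → Fin n → ℝ}
    (hnorm : limsup (fun n => kerNorm (stepKernel n (Q n)) (q * G.maxDegree)) atTop ≠ ⊤)
    (hδ : 0 < δ) :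
    Tendsto (fun M : ℝ => expGrowthSup fun n => (Measure.pi fun _ : Fin n => μ)
      {x | δ ≤ |tupleStat G (S n) ({y | M < |φ y|}.indicator φ) (Q n) x|}) atTop (𝓝 ⊥) := by
  have hp0 : p ≠ 0 := by
    rintro rfl
    simp at hpq
  obtain ⟨C, hlimsup, -⟩ := ENNReal.lt_iff_exists_nnreal_btwn.1 (lt_top_iff_ne_top.2 hnorm)
  have hQ := (eventually_lt_of_limsup_lt hlimsup).mono fun _ => le_of_lt
  have hmean := tendsto_expGrowthSup_mul_sampleMean_indicator_ge (hψmeas.pow_const p.toReal)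
    (fun x => Real.rpow_nonneg (hψ x) _) hψmeas
    (fun l hl => hTail.integrable_exp_mul_rpow hψmeas hptop hl)
    (by positivity : 0 ≤ (v : ℝ) * (C ^ edgeCard G) ^ p.toReal) (Real.rpow_pos_of_pos hδ p.toReal)
    (v - 1)
  refine EReal.tendsto_nhds_bot_iff_real.2 fun b => ?_
  obtain ⟨T, hb, hT⟩ := ((EReal.tendsto_nhds_bot_iff_real.1 hmean b).and
    (eventually_ge_atTop 0)).exists
  filter_upwards [eventually_ge_atTop (T ^ v)] with M hTM
  exact (expGrowthSup_tupleStat_tail_le μ hψ hdom hp0 hptop hpq hT hTM S hQ hδ.le).trans_lt hb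

theorem tendsto_expGrowthSup_tupleStat_tail (hψmeas : Measurable ψ) (hψ : ∀ x, 0 ≤ ψ x)
    (hTail : TailCond μ ψ p) (hdom : ∀ y, |φ y| ≤ ∏ a, ψ (y a)) (hpq : p⁻¹ + q⁻¹ ≤ 1)
    (S : ∀ n, Finset (Fin v → Fin n)) {Q : ∀ n, Fin n → Fin n → ℝ}
    (hnorm : limsup (fun n => kerNorm (stepKernel n (Q n)) (q * G.maxDegree)) atTop ≠ ⊤)
    (hδ : 0 < δ) :
    Tendsto (fun M : ℝ => expGrowthSup fun n => (Measure.pi fun _ : Fin n => μ)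
      {x | δ ≤ |tupleStat G (S n) ({y | M < |φ y|}.indicator φ) (Q n) x|}) atTop (𝓝 ⊥) := by
  rcases eq_or_ne p ⊤ with rfl | hptop
  · rw [TailCond, if_pos rfl] at hTail
    obtain ⟨B, hB⟩ := hTail
    have hφ (y : Fin v → X) : |φ y| ≤ B ^ v := (hdom y).trans <| by
      simpa using Finset.prod_le_prod (fun a _ => hψ (y a)) fun a (_ : a ∈ Finset.univ) => hB (y a)
    exact tendsto_expGrowthSup_tupleStat_tail_of_bounded μ hφ S Q hδ
  · exact tendsto_expGrowthSup_tupleStat_tail_of_ne_top hψmeas hψ hptop hTail hdom hpq S hnorm hδ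

end Truncation

theorem truncation_exponential_equivalence_general {X : Type*} [MeasurableSpace X] (μ : Measure X)
    [IsProbabilityMeasure μ] {v : ℕ} (G : SimpleGraph (Fin v)) [DecidableRel G.Adj]
    (φ : (Fin v → X) → ℝ) (S : ∀ n, Finset (Fin v → Fin n)) (Q : ∀ n, Fin n → Fin n → ℝ)
    (ψ : X → ℝ) (hψmeas : Measurable ψ) (hψpos : ∀ x, 0 ≤ ψ x) (p : ℝ≥0∞)
    (hTail : TailCond μ ψ p) (hdom : ∀ y : Fin v → X, |φ y| ≤ ∏ a, ψ (y a)) (q : ℝ≥0∞)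
    (hpq : p⁻¹ + q⁻¹ ≤ 1)
    (hnorm : limsup (fun n => kerNorm (stepKernel n (Q n)) (q * (G.maxDegree : ℝ≥0∞))) atTop ≠ ⊤)
    (δ : ℝ) (hδ : 0 < δ) :
    limsup (fun M : ℝ => limsup (fun n : ℕ =>
      (((n : ℝ)⁻¹ : ℝ) : EReal) * ENNReal.log ((Measure.pi fun _ : Fin n => μ)
        {x | δ ≤ |tupleStat G (S n) φ (Q n) x -
          tupleStat G (S n) (fun y => if |φ y| ≤ M then φ y else 0) (Q n) x|})) atTop) atTop =
      ⊥ := by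
  simp only [limsup_inv_mul_log_eq_expGrowthSup, tupleStat_sub_truncation]
  exact (tendsto_expGrowthSup_tupleStat_tail hψmeas hψpos hTail hdom hpq S hnorm hδ).limsup_eq

/-- Lemma 2.3 (i): exponential-equivalence of the truncated
U/V-statistics, where `φ_M = φ·1{|φ| ≤ M}`. -/
theorem truncation_exponential_equivalence
    {X : Type*} [MeasurableSpace X] [TopologicalSpace X] [PolishSpace X] [BorelSpace X]
    (μ : Measure X) [IsProbabilityMeasure μ]
    {v : ℕ} (hv : 2 ≤ v) (G : SimpleGraph (Fin v)) [DecidableRel G.Adj]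
    (φ : (Fin v → X) → ℝ) (hφ : Measurable φ)
    (Q : ∀ n : ℕ, Fin n → Fin n → ℝ)
    (hQsymm : ∀ n i j, Q n i j = Q n j i) (hQzero : ∀ n i, Q n i i = 0)
    (ψ : X → ℝ) (hψmeas : Measurable ψ) (hψpos : ∀ x, 0 ≤ ψ x)
    (p : ℝ≥0∞) (hp : 1 ≤ p) (hTail : TailCond μ ψ p)
    (hdom : ∀ y : Fin v → X, |φ y| ≤ ∏ a, ψ (y a))
    (q : ℝ≥0∞) (hq : 1 < q) (hpq : p⁻¹ + q⁻¹ ≤ 1)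
    (hnorm : Filter.atTop.limsup
        (fun n => kerNorm (stepKernel n (Q n)) (q * (G.maxDegree : ℝ≥0∞))) ≠ ⊤)
    (δ : ℝ) (hδ : 0 < δ) :
    (Filter.atTop.limsup (fun M : ℝ => Filter.atTop.limsup fun n : ℕ =>
        (((n : ℝ)⁻¹ : ℝ) : EReal) * ENNReal.log ((Measure.pi fun _ : Fin n => μ)
          {x | δ ≤ |Vstat G φ n (Q n) x -
            Vstat G (fun y => if |φ y| ≤ M then φ y else 0) n (Q n) x|})) = ⊥) ∧
    (Filter.atTop.limsup (fun M : ℝ => Filter.atTop.limsup fun n : ℕ =>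
        (((n : ℝ)⁻¹ : ℝ) : EReal) * ENNReal.log ((Measure.pi fun _ : Fin n => μ)
          {x | δ ≤ |Ustat G φ n (Q n) x -
            Ustat G (fun y => if |φ y| ≤ M then φ y else 0) n (Q n) x|})) = ⊥) := by
  have general (S : ∀ n, Finset (Fin v → Fin n)) := truncation_exponential_equivalence_general
    μ G φ S Q ψ hψmeas hψpos p hTail hdom q hpq hnorm δ hδ
  exact ⟨general fun _ => Finset.univ, general fun _ => Finset.univ.filter Function.Injective⟩
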